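/- There is an absolute constant c₀ such that for every n ∈ ℕ and every bounded linear operator T : X → Y between real Banach spaces of rank at most n which is absolutely (2,1)-summing, one has π_1(T) ≤ c₀ · (n(1 + ln n))^{1/2} · π_{2,1}(T). -/

import Mathlib

open scoped ENNReal NNReal BigOperators

noncomputable section

/-- The `ℓ_p`-sum `(∑ i, f i ^ p) ^ (1/p)` of a finite family in `ℝ≥0∞`,
with the usual sup-modification for `p = ∞`. -/
def eSum (p : ℝ≥0∞) {ι : Type*} [Fintype ι] (f : ι → ℝ≥0∞) : ℝ≥0∞ :=
  if p = ∞ then ⨆ i, f i else (∑ i, f i ^ p.toReal) ^ (1 / p.toReal)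

/-- The weak `ℓ_q`-norm of a finite family of vectors:
`sup { (∑ k |⟨x_k, x*⟩|^q)^(1/q) : x* in the unit ball of the dual }`. -/
def weakLq (q : ℝ≥0∞) {X : Type*} [NormedAddCommGroup X] [NormedSpace ℝ X]
    {n : ℕ} (x : Fin n → X) : ℝ≥0∞ :=
  ⨆ f : {f : X →L[ℝ] ℝ // ‖f‖ ≤ 1}, eSum q fun k => ENNReal.ofReal |f.1 (x k)|

/-- The `(p,q)`-summing norm of `T` with respect to `n` vectors. -/
def piN (p q : ℝ≥0∞) {X Y : Type*} [NormedAddCommGroup X] [NormedSpace ℝ X]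
    [NormedAddCommGroup Y] [NormedSpace ℝ Y] (n : ℕ) (T : X →L[ℝ] Y) : ℝ≥0∞ :=
  ⨆ x : {x : Fin n → X // weakLq q x ≤ 1}, eSum p fun k => ENNReal.ofReal ‖T (x.1 k)‖

/-- The `(p,q)`-summing norm of `T`. -/
def piPQ (p q : ℝ≥0∞) {X Y : Type*} [NormedAddCommGroup X] [NormedSpace ℝ X]
    [NormedAddCommGroup Y] [NormedSpace ℝ Y] (T : X →L[ℝ] Y) : ℝ≥0∞ :=
  ⨆ n : ℕ, piN p q n T

/-- `T` has rank at most `n`: its range is a finite-dimensional subspace of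
dimension at most `n`. -/
def RankLE {X Y : Type*} [NormedAddCommGroup X] [NormedSpace ℝ X]
    [NormedAddCommGroup Y] [NormedSpace ℝ Y] (T : X →L[ℝ] Y) (n : ℕ) : Prop :=
  FiniteDimensional ℝ (LinearMap.range (T : X →ₗ[ℝ] Y)) ∧
    Module.finrank ℝ (LinearMap.range (T : X →ₗ[ℝ] Y)) ≤ n

/-- The average of `‖∑ k, ε k • x k‖²` over all `2^n` sign choices `ε ∈ {-1,1}^n`. -/
def radAvg {X : Type*} [NormedAddCommGroup X] [NormedSpace ℝ X] {n : ℕ}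
    (x : Fin n → X) : ℝ :=
  (∑ ε : Fin n → Bool, ‖∑ k, (if ε k then (1 : ℝ) else -1) • x k‖ ^ 2) / 2 ^ n

/-- The Rademacher cotype `q` constant of `T` with respect to `n` vectors. -/
def cotypeN (q : ℝ) {X Y : Type*} [NormedAddCommGroup X] [NormedSpace ℝ X]
    [NormedAddCommGroup Y] [NormedSpace ℝ Y] (n : ℕ) (T : X →L[ℝ] Y) : ℝ≥0∞ :=
  ⨆ x : {x : Fin n → X // Real.sqrt (radAvg x) ≤ 1},
    (∑ k, ENNReal.ofReal ‖T (x.1 k)‖ ^ q) ^ (1 / q)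

/-- The Rademacher cotype `q` constant of `T`. -/
def cotype (q : ℝ) {X Y : Type*} [NormedAddCommGroup X] [NormedSpace ℝ X]
    [NormedAddCommGroup Y] [NormedSpace ℝ Y] (T : X →L[ℝ] Y) : ℝ≥0∞ :=
  ⨆ n : ℕ, cotypeN q n T

/-! Let `x` be a weakly 1-summable family of `m` vectors. Choosing functionals that norm the vectors
`T (x k)` turns the range of `T` into a subspace `G` of `ℝ^m` of dimension at most `n`. Maximising
the determinant of the Gram matrix of a basis of `G` over all probability weights `p` gives an inner
product `∑ i, p i * g i * h i` whose reproducing kernel `K` on `G` is bounded by `n` and satisfies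
`∑ i, p i * K i k ^ 2 ≤ n` for every `k`. Hence `∑ k, ‖T (x k)‖` is at most the `p`-average of
`‖V (K i)‖`, where `V h = T (∑ k, h k • x k)` is a `(2,1)`-summing operator on `ℓ_∞`.

Pisier's inequality bounds `∑ i, l i * ‖V (g i)‖ ^ 2` for nonnegative weights whenever `|g i| ≤ 1`
and `∑ i, l i * |g i| ≤ 1` pointwise. Cutting the rows of `K` at the heights `n / 2 ^ s`, all layers
obey it at once because the squares of the truncations telescope. Only the number of layers, of
order `1 + log n`, is lost. -/

section OptimalDesign

open scoped Matrix

variable {ι κ : Type*} [Fintype ι] [DecidableEq ι]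

/-- The information matrix `∑ k, p k • W k (W k)ᵀ` of the design `p`, a weight on the points
`k : ι`, for the regression functions given by the columns of `W`. -/
def informationMatrix (W : Matrix ι κ ℝ) (p : ι → ℝ) : Matrix κ κ ℝ :=
  Wᵀ * Matrix.diagonal p * W

lemma transpose_informationMatrix (W : Matrix ι κ ℝ) (p : ι → ℝ) :
    (informationMatrix W p)ᵀ = informationMatrix W p := by
  simp [informationMatrix, Matrix.mul_assoc]

lemma informationMatrix_smul (W : Matrix ι κ ℝ) (a : ℝ) (p : ι → ℝ) :
    informationMatrix W (a • p) = a • informationMatrix W p := by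
  simp [informationMatrix, Matrix.diagonal_smul]

lemma informationMatrix_add_single (W : Matrix ι κ ℝ) (p : ι → ℝ) (k : ι) (s : ℝ) :
    informationMatrix W (p + Pi.single k s) = informationMatrix W p +
      Matrix.replicateCol Unit (W k) * Matrix.replicateRow Unit (s • W k) := by
  ext a b
  simp only [informationMatrix, Matrix.mul_apply, Matrix.transpose_apply, Matrix.diagonal_apply,
    Pi.add_apply, Pi.single_apply, mul_ite, mul_zero, Finset.sum_ite_eq', Finset.mem_univ, if_true,
    mul_add, add_mul, ite_mul, zero_mul, Finset.sum_add_distrib, Matrix.add_apply,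
    Matrix.replicateCol_apply, Matrix.replicateRow_apply, Pi.smul_apply, smul_eq_mul,
    Fintype.sum_unique]
  ring

variable [Fintype κ] [DecidableEq κ]

/-- The kernel of the projection onto the column space of `W` that is orthogonal for the inner
product `∑ i, p i * f i * g i`, provided that the information matrix is invertible. -/
def designKernel (W : Matrix ι κ ℝ) (p : ι → ℝ) : Matrix ι ι ℝ :=
  W * (informationMatrix W p)⁻¹ * Wᵀ

lemma transpose_designKernel (W : Matrix ι κ ℝ) (p : ι → ℝ) :
    (designKernel W p)ᵀ = designKernel W p := by
  simp [designKernel, Matrix.transpose_nonsing_inv, transpose_informationMatrix, Matrix.mul_assoc]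

lemma designKernel_mul_diagonal_mul {W : Matrix ι κ ℝ} {p : ι → ℝ}
    (h : IsUnit (informationMatrix W p).det) :
    designKernel W p * Matrix.diagonal p * W = W := by
  calc designKernel W p * Matrix.diagonal p * W
      = W * ((informationMatrix W p)⁻¹ * informationMatrix W p) := by
        simp only [designKernel, informationMatrix, Matrix.mul_assoc]
    _ = W := by rw [Matrix.nonsing_inv_mul _ h, Matrix.mul_one]

lemma designKernel_mul_diagonal_mul_self {W : Matrix ι κ ℝ} {p : ι → ℝ}
    (h : IsUnit (informationMatrix W p).det) :
    designKernel W p * Matrix.diagonal p * designKernel W p = designKernel W p := by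
  conv_lhs => enter [2]; rw [designKernel, Matrix.mul_assoc]
  rw [← Matrix.mul_assoc, designKernel_mul_diagonal_mul h, designKernel, Matrix.mul_assoc]

lemma designKernel_apply_eq_sum {W : Matrix ι κ ℝ} {p : ι → ℝ}
    (h : IsUnit (informationMatrix W p).det) (k i : ι) :
    designKernel W p k i = ∑ j, p j * (designKernel W p k j * designKernel W p i j) := by
  conv_lhs => rw [← designKernel_mul_diagonal_mul_self h, Matrix.mul_apply]
  refine Finset.sum_congr rfl fun j _ => ?_
  rw [Matrix.mul_diagonal, ← Matrix.transpose_apply (designKernel W p) i j,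
    transpose_designKernel]
  ring

lemma sum_mul_sq_designKernel {W : Matrix ι κ ℝ} {p : ι → ℝ}
    (h : IsUnit (informationMatrix W p).det) (k : ι) :
    ∑ j, p j * designKernel W p k j ^ 2 = designKernel W p k k := by
  simp only [designKernel_apply_eq_sum h k k, sq]

lemma designKernel_self_nonneg {W : Matrix ι κ ℝ} {p : ι → ℝ} (hp : ∀ i, 0 ≤ p i)
    (h : IsUnit (informationMatrix W p).det) (k : ι) : 0 ≤ designKernel W p k k := by
  rw [← sum_mul_sq_designKernel h k]
  exact Finset.sum_nonneg fun j _ => mul_nonneg (hp j) (sq_nonneg _)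

lemma sq_designKernel_le {W : Matrix ι κ ℝ} {p : ι → ℝ} (hp : ∀ i, 0 ≤ p i)
    (h : IsUnit (informationMatrix W p).det) (k i : ι) :
    designKernel W p k i ^ 2 ≤ designKernel W p k k * designKernel W p i i := by
  rw [designKernel_apply_eq_sum h k i, ← sum_mul_sq_designKernel h k,
    ← sum_mul_sq_designKernel h i]
  exact Finset.sum_sq_le_sum_mul_sum_of_sq_le_mul _
    (fun j _ => mul_nonneg (hp j) (sq_nonneg _))
    (fun j _ => mul_nonneg (hp j) (sq_nonneg _)) fun j _ => le_of_eq (by ring)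

lemma det_informationMatrix_add_single {W : Matrix ι κ ℝ} {p : ι → ℝ}
    (h : IsUnit (informationMatrix W p).det) (k : ι) (s : ℝ) :
    (informationMatrix W (p + Pi.single k s)).det =
      (informationMatrix W p).det * (1 + s * designKernel W p k k) := by
  rw [informationMatrix_add_single, Matrix.det_add_mul _ _ h, Matrix.det_unique (n := Unit)]
  congr 2
  simp [designKernel, Matrix.mul_apply, Finset.mul_sum]

lemma exists_isMaxOn_det_informationMatrix [Nonempty ι] {W : Matrix ι κ ℝ}
    (hW : Function.Injective W.mulVec) :
    ∃ p ∈ stdSimplex ℝ ι, 0 < (informationMatrix W p).det ∧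
      IsMaxOn (fun q => (informationMatrix W q).det) (stdSimplex ℝ ι) p := by
  set u : ι → ℝ := (Fintype.card ι : ℝ)⁻¹ • 1
  have hu : u ∈ stdSimplex ℝ ι := ⟨fun _ => by simp [u], by simp [u]⟩
  have hu_pos : 0 < (informationMatrix W u).det := by
    have hgram : informationMatrix W 1 = Wᴴ * W := by simp [informationMatrix]
    have := (Matrix.PosDef.conjTranspose_mul_self W hW).det_pos
    rw [informationMatrix_smul, Matrix.det_smul, hgram]
    positivity
  have hcont : Continuous fun p => (informationMatrix W p).det := by
    unfold informationMatrix
    fun_prop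
  obtain ⟨p, hp, hmax⟩ :=
    (isCompact_stdSimplex ℝ ι).exists_isMaxOn ⟨u, hu⟩ hcont.continuousOn
  exact ⟨p, hp, hu_pos.trans_le (hmax hu), hmax⟩

lemma le_natCast_of_one_add_mul_le_pow {a : ℝ} {d : ℕ}
    (h : ∀ s : ℝ, 0 < s → 1 + s * a ≤ (1 + s) ^ d) : a ≤ d := by
  have hderiv : HasDerivAt (fun s : ℝ => (1 + s) ^ d) d 0 := by
    simpa using ((hasDerivAt_id (0 : ℝ)).const_add 1).fun_pow d
  refine ge_of_tendsto hderiv.tendsto_slope_zero_right ?_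
  filter_upwards [self_mem_nhdsWithin] with s (hs : 0 < s)
  rw [smul_eq_mul, le_inv_mul_iff₀ hs]
  simpa using le_sub_iff_add_le'.mpr (h s hs)

/-- The Kiefer–Wolfowitz theorem: a D-optimal design is G-optimal. -/
theorem designKernel_self_le_card {W : Matrix ι κ ℝ} {p : ι → ℝ} (hp : p ∈ stdSimplex ℝ ι)
    (hpos : 0 < (informationMatrix W p).det)
    (hmax : IsMaxOn (fun q => (informationMatrix W q).det) (stdSimplex ℝ ι) p) (k : ι) :
    designKernel W p k k ≤ Fintype.card κ := by
  refine le_natCast_of_one_add_mul_le_pow fun s hs => ?_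
  have hmem : (1 + s)⁻¹ • (p + Pi.single k s) ∈ stdSimplex ℝ ι := by
    have hsingle : 0 ≤ Pi.single (M := fun _ : ι => ℝ) k s := Pi.single_nonneg.mpr hs.le
    refine ⟨fun i => mul_nonneg (by positivity) (add_nonneg (hp.1 i) (hsingle i)), ?_⟩
    simp only [Pi.smul_apply, Pi.add_apply, smul_eq_mul, ← Finset.mul_sum,
      Finset.sum_add_distrib, hp.2, Finset.sum_pi_single', Finset.mem_univ, if_true]
    exact inv_mul_cancel₀ (by positivity)
  have hle : (informationMatrix W ((1 + s)⁻¹ • (p + Pi.single k s))).det ≤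
      (informationMatrix W p).det := hmax hmem
  rw [informationMatrix_smul, Matrix.det_smul, inv_pow, inv_mul_le_iff₀ (by positivity),
    det_informationMatrix_add_single hpos.ne'.isUnit, mul_comm] at hle
  exact le_of_mul_le_mul_right hle hpos

end OptimalDesign

theorem exists_reproducing_kernel {ι : Type*} [Fintype ι] [Nonempty ι] (G : Submodule ℝ (ι → ℝ)) :
    ∃ p ∈ stdSimplex ℝ ι, ∃ K : ι → ι → ℝ,
      (∀ i k, |K i k| ≤ Module.finrank ℝ G) ∧
      (∀ k, ∑ i, p i * K i k ^ 2 ≤ Module.finrank ℝ G) ∧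
      ∀ g ∈ G, ∀ k, g k = ∑ i, p i * K i k * g i := by
  classical
  set b := Module.finBasis ℝ G
  set W : Matrix ι (Fin (Module.finrank ℝ G)) ℝ := fun k j => (b j : ι → ℝ) k
  have hW_mulVec (v) : W.mulVec v = ((∑ j, v j • b j : G) : ι → ℝ) := by
    ext k
    simp [Matrix.mulVec, dotProduct, W, mul_comm]
  have hW : Function.Injective W.mulVec := by
    intro v w h
    rw [hW_mulVec, hW_mulVec] at h
    exact b.equivFun.symm.injective (by simpa only [b.equivFun_symm_apply] using Subtype.ext h)
  obtain ⟨p, hp, hpos, hmax⟩ := exists_isMaxOn_det_informationMatrix hW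
  have hunit := hpos.ne'.isUnit
  have hdiag (k) : designKernel W p k k ≤ Module.finrank ℝ G := by
    simpa using designKernel_self_le_card hp hpos hmax k
  refine ⟨p, hp, fun i k => designKernel W p k i, fun i k => ?_, fun k => ?_, fun g hg k => ?_⟩
  · refine abs_le_of_sq_le_sq ?_ (Nat.cast_nonneg _)
    rw [sq (Module.finrank ℝ G : ℝ)]
    exact (sq_designKernel_le hp.1 hunit k i).trans <|
      mul_le_mul (hdiag k) (hdiag i) (designKernel_self_nonneg hp.1 hunit i) (Nat.cast_nonneg _)
  · exact (sum_mul_sq_designKernel hunit k).trans_le (hdiag k)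
  · have hg_eq : g = W.mulVec (b.equivFun ⟨g, hg⟩) := by
      rw [hW_mulVec, b.sum_equivFun]
    have hproj : (designKernel W p * Matrix.diagonal p).mulVec g = g := by
      rw [hg_eq, Matrix.mulVec_mulVec, designKernel_mul_diagonal_mul hunit]
    conv_lhs => rw [← hproj]
    simp only [Matrix.mulVec, dotProduct, Matrix.mul_diagonal, mul_comm (p _)]

section Sampling

variable {ι κ Y : Type*} [NormedAddCommGroup Y] [NormedSpace ℝ Y]

/-- The probability that `N` independent draws from `q` produce the sample `τ`. -/
def sampleWeight (q : ι → ℝ) {N : ℕ} (τ : Fin N → ι) : ℝ :=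
  ∏ l, q (τ l)

lemma sampleWeight_nonneg {q : ι → ℝ} (hq : ∀ i, 0 ≤ q i) {N : ℕ} (τ : Fin N → ι) :
    0 ≤ sampleWeight q τ :=
  Finset.prod_nonneg fun l _ => hq (τ l)

/-- The factor that damps a further vector when the vectors `g (τ l)` have already been drawn: if
every vector of a sample is damped by the others, then the absolute values sum to at most `1`. -/
def damping (g : ι → κ → ℝ) {N : ℕ} (τ : Fin N → ι) : κ → ℝ :=
  fun k => (1 + ∑ l, |g (τ l) k|)⁻¹

lemma damping_nonneg (g : ι → κ → ℝ) {N : ℕ} (τ : Fin N → ι) (k : κ) : 0 ≤ damping g τ k :=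
  inv_nonneg.mpr (by positivity)

lemma sum_abs_mul_damping_le_one {g : ι → κ → ℝ} (hg : ∀ i k, |g i k| ≤ 1) {N : ℕ}
    (σ : Fin (N + 1) → ι) (k : κ) :
    ∑ j, |g (σ j) k| * damping g (j.removeNth σ) k ≤ 1 := by
  set S := ∑ j, |g (σ j) k|
  have hterm (j) : |g (σ j) k| * damping g (j.removeNth σ) k ≤ |g (σ j) k| / S := by
    have hsplit : S = |g (σ j) k| + ∑ l, |g (j.removeNth σ l) k| :=
      Fin.sum_univ_succAbove _ j
    have hle : S ≤ 1 + ∑ l, |g (j.removeNth σ l) k| := by linarith [hg (σ j) k]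
    rcases (abs_nonneg (g (σ j) k)).eq_or_lt with h | h
    · simp only [← h, zero_mul, zero_div, le_refl]
    · have hS : 0 < S := hsplit ▸ add_pos_of_pos_of_nonneg h (by positivity)
      exact mul_le_mul_of_nonneg_left (inv_anti₀ hS hle) h.le
  calc ∑ j, |g (σ j) k| * damping g (j.removeNth σ) k
      ≤ ∑ j, |g (σ j) k| / S := Finset.sum_le_sum fun j _ => hterm j
    _ = S / S := (Finset.sum_div _ _ _).symm
    _ ≤ 1 := div_self_le_one S

variable [Fintype ι]

lemma sum_sampleWeight {q : ι → ℝ} (hq : ∑ i, q i = 1) (N : ℕ) :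
    ∑ τ : Fin N → ι, sampleWeight q τ = 1 := by
  simp only [sampleWeight, ← Fintype.sum_pow, hq, one_pow]

lemma sum_sampleWeight_mul_removeNth (q : ι → ℝ) {N : ℕ} (j : Fin (N + 1))
    (F : ι → (Fin N → ι) → ℝ) :
    ∑ σ : Fin (N + 1) → ι, sampleWeight q σ * F (σ j) (j.removeNth σ) =
      ∑ i, q i * ∑ τ, sampleWeight q τ * F i τ := by
  have hremove (i : ι) (τ : Fin N → ι) :
      j.removeNth (Fin.insertNthEquiv (fun _ => ι) j (i, τ)) = τ :=
    congrArg Prod.snd ((Fin.insertNthEquiv (fun _ => ι) j).symm_apply_apply (i, τ))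
  rw [← (Fin.insertNthEquiv (fun _ => ι) j).sum_comp, Fintype.sum_prod_type]
  simp only [sampleWeight, hremove, Fin.insertNthEquiv_apply, Fin.prod_univ_succAbove _ j,
    Fin.insertNth_apply_same, Fin.insertNth_apply_succAbove, Finset.mul_sum, mul_assoc]

lemma sum_sampleWeight_mul_apply {q : ι → ℝ} (hq : ∑ i, q i = 1) {N : ℕ} (φ : ι → ℝ)
    (l : Fin N) : ∑ τ : Fin N → ι, sampleWeight q τ * φ (τ l) = ∑ i, q i * φ i := by
  cases N with
  | zero => exact l.elim0
  | succ N =>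
    simpa only [← Finset.sum_mul, sum_sampleWeight hq, one_mul] using
      sum_sampleWeight_mul_removeNth q l fun i _ => φ i

lemma sum_sampleWeight_mul_sum {q : ι → ℝ} (hq : ∑ i, q i = 1) (N : ℕ) (φ : ι → ℝ) :
    ∑ τ : Fin N → ι, sampleWeight q τ * ∑ l, φ (τ l) = N * ∑ i, q i * φ i := by
  calc ∑ τ : Fin N → ι, sampleWeight q τ * ∑ l, φ (τ l)
      = ∑ l, ∑ τ : Fin N → ι, sampleWeight q τ * φ (τ l) := by
        rw [Finset.sum_comm]
        exact Finset.sum_congr rfl fun τ _ => Finset.mul_sum _ _ _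
    _ = N * ∑ i, q i * φ i := by
        simp only [sum_sampleWeight_mul_apply hq, Finset.sum_const, Finset.card_univ,
          Fintype.card_fin, nsmul_eq_mul]

/-- The expectation of `damping` over samples of size `N`. -/
def meanDamping (q : ι → ℝ) (g : ι → κ → ℝ) (N : ℕ) : κ → ℝ :=
  fun k => ∑ τ : Fin N → ι, sampleWeight q τ * damping g τ k

lemma half_le_meanDamping {q : ι → ℝ} (hq : q ∈ stdSimplex ℝ ι) {g : ι → κ → ℝ} {N : ℕ} {k : κ}
    (hN : N * ∑ i, q i * |g i k| ≤ 1) : 1 / 2 ≤ meanDamping q g N k := by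
  set X : (Fin N → ι) → ℝ := fun τ => 1 + ∑ l, |g (τ l) k|
  have hX (τ) : 0 < X τ := by positivity
  have hw (τ : Fin N → ι) := sampleWeight_nonneg hq.1 τ
  have hEX : ∑ τ, sampleWeight q τ * X τ ≤ 2 := by
    simp only [X, mul_add, mul_one, Finset.sum_add_distrib, sum_sampleWeight hq.2,
      sum_sampleWeight_mul_sum hq.2 N fun i => |g i k|]
    linarith
  have hcs : (∑ τ : Fin N → ι, sampleWeight q τ) ^ 2 ≤
      (∑ τ, sampleWeight q τ * X τ) * meanDamping q g N k := by
    refine Finset.sum_sq_le_sum_mul_sum_of_sq_le_mul _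
      (fun τ _ => mul_nonneg (hw τ) (hX τ).le)
      (fun τ _ => mul_nonneg (hw τ) (damping_nonneg g τ k)) fun τ _ => ?_
    rw [mul_mul_mul_comm, show X τ * damping g τ k = 1 from mul_inv_cancel₀ (hX τ).ne', mul_one, sq]
  have hmean_nonneg : 0 ≤ meanDamping q g N k :=
    Finset.sum_nonneg fun τ _ => mul_nonneg (hw τ) (damping_nonneg g τ k)
  rw [sum_sampleWeight hq.2] at hcs
  linarith [mul_le_mul_of_nonneg_right hEX hmean_nonneg]

lemma sq_norm_sum_smul_le {w : ι → ℝ} (hw : w ∈ stdSimplex ℝ ι) (y : ι → Y) :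
    ‖∑ i, w i • y i‖ ^ 2 ≤ ∑ i, w i * ‖y i‖ ^ 2 := by
  simpa only [smul_eq_mul, Pi.pow_apply] using
    (convexOn_univ_norm.pow (fun _ _ => norm_nonneg _) 2).map_sum_le (p := y)
      (fun i _ => hw.1 i) hw.2 fun _ _ => Set.mem_univ _

/-- The `(2,1)`-summing norm of `V`, as an operator on `ℓ_∞(κ)`, is at most `P`: for finite `κ`
the weak `ℓ₁`-norm of a family in `ℓ_∞(κ)` is the largest coordinate of the sum of its absolute
values. -/
def HasTwoOneSummingBound (V : (κ → ℝ) →ₗ[ℝ] Y) (P : ℝ) : Prop :=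
  ∀ (N : ℕ) (h : Fin N → κ → ℝ), (∀ k, ∑ j, |h j k| ≤ 1) → ∑ j, ‖V (h j)‖ ^ 2 ≤ P ^ 2

namespace HasTwoOneSummingBound

variable {V : (κ → ℝ) →ₗ[ℝ] Y} {P : ℝ}

lemma sum_sq_norm_le (hV : HasTwoOneSummingBound V P) {c : ℝ} (hc : 0 < c) {N : ℕ}
    {h : Fin N → κ → ℝ} (hh : ∀ k, ∑ j, |h j k| ≤ c) :
    ∑ j, ‖V (h j)‖ ^ 2 ≤ c ^ 2 * P ^ 2 := by
  have hscaled := hV N (fun j => c⁻¹ • h j) fun k => by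
    simp only [Pi.smul_apply, smul_eq_mul, abs_mul, abs_inv, abs_of_pos hc, ← Finset.mul_sum]
    exact inv_mul_le_one_of_le₀ (hh k) hc.le
  simp only [map_smul, norm_smul, norm_inv, Real.norm_of_nonneg hc.le, mul_pow, inv_pow,
    ← Finset.mul_sum] at hscaled
  rwa [inv_mul_le_iff₀ (by positivity)] at hscaled

end HasTwoOneSummingBound

variable {q : ι → ℝ} {g : ι → κ → ℝ} {N : ℕ}

lemma sq_norm_map_le_sum_damped (V : (κ → ℝ) →ₗ[ℝ] Y) (hq : q ∈ stdSimplex ℝ ι)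
    (hN : ∀ k, N * ∑ i, q i * |g i k| ≤ 1) (x : κ → ℝ) :
    ‖V x‖ ^ 2 ≤ ∑ τ : Fin N → ι,
      sampleWeight q τ * ‖V (damping g τ / meanDamping q g N * x)‖ ^ 2 := by
  classical
  have hmean : x = ∑ τ : Fin N → ι, sampleWeight q τ • (damping g τ / meanDamping q g N * x) := by
    ext k
    have hpos : 0 < meanDamping q g N k :=
      one_half_pos.trans_le (half_le_meanDamping hq (hN k))
    simp only [Finset.sum_apply, Pi.smul_apply, Pi.mul_apply, Pi.div_apply, smul_eq_mul,
      ← mul_assoc, ← mul_div_assoc, ← Finset.sum_mul, ← Finset.sum_div]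
    rw [← meanDamping, div_self hpos.ne', one_mul]
  conv_lhs => rw [hmean, map_sum]
  simp only [map_smul]
  exact sq_norm_sum_smul_le ⟨fun τ => sampleWeight_nonneg hq.1 τ, sum_sampleWeight hq.2 N⟩ _

lemma sum_abs_damped_le_two (hq : q ∈ stdSimplex ℝ ι) (hg : ∀ i k, |g i k| ≤ 1)
    (hN : ∀ k, N * ∑ i, q i * |g i k| ≤ 1) (σ : Fin (N + 1) → ι) (k : κ) :
    ∑ j, |(damping g (j.removeNth σ) / meanDamping q g N * g (σ j)) k| ≤ 2 := by
  have hhalf : 1 / 2 ≤ meanDamping q g N k := half_le_meanDamping hq (hN k)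
  have hpos : 0 < meanDamping q g N k := one_half_pos.trans_le hhalf
  have hterm (j) : |(damping g (j.removeNth σ) / meanDamping q g N * g (σ j)) k| =
      |g (σ j) k| * damping g (j.removeNth σ) k / meanDamping q g N k := by
    rw [Pi.mul_apply, Pi.div_apply, abs_mul, abs_div, abs_of_nonneg (damping_nonneg _ _ _),
      abs_of_pos hpos, mul_comm, mul_div_assoc]
  rw [Finset.sum_congr rfl fun j _ => hterm j, ← Finset.sum_div, div_le_iff₀ hpos]
  linarith [sum_abs_mul_damping_le_one hg σ k]

namespace HasTwoOneSummingBound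

variable {V : (κ → ℝ) →ₗ[ℝ] Y} {P : ℝ}

/-- The left-hand side is estimated by averaging over `N + 1` independent draws, each of which is
damped by the `N` others. -/
lemma succ_mul_sum_mul_sq_norm_le (hV : HasTwoOneSummingBound V P) (hq : q ∈ stdSimplex ℝ ι)
    (hg : ∀ i k, |g i k| ≤ 1) (hN : ∀ k, N * ∑ i, q i * |g i k| ≤ 1) :
    (N + 1) * ∑ i, q i * ‖V (g i)‖ ^ 2 ≤ 4 * P ^ 2 := by
  set F : ι → (Fin N → ι) → ℝ := fun i τ => ‖V (damping g τ / meanDamping q g N * g i)‖ ^ 2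
  have hF (σ : Fin (N + 1) → ι) : ∑ j, F (σ j) (j.removeNth σ) ≤ 4 * P ^ 2 :=
    (hV.sum_sq_norm_le two_pos (sum_abs_damped_le_two hq hg hN σ)).trans_eq (by norm_num)
  calc (N + 1) * ∑ i, q i * ‖V (g i)‖ ^ 2
      ≤ (N + 1) * ∑ i, q i * ∑ τ, sampleWeight q τ * F i τ := by
        gcongr with i
        · exact hq.1 i
        · exact sq_norm_map_le_sum_damped V hq hN (g i)
    _ = ∑ j : Fin (N + 1), ∑ σ : Fin (N + 1) → ι,
          sampleWeight q σ * F (σ j) (j.removeNth σ) := by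
        simp only [sum_sampleWeight_mul_removeNth, Finset.sum_const, Finset.card_univ,
          Fintype.card_fin, nsmul_eq_mul, Nat.cast_succ]
    _ = ∑ σ : Fin (N + 1) → ι, sampleWeight q σ * ∑ j, F (σ j) (j.removeNth σ) := by
        rw [Finset.sum_comm]
        simp only [Finset.mul_sum]
    _ ≤ ∑ σ : Fin (N + 1) → ι, sampleWeight q σ * (4 * P ^ 2) := by
        gcongr with σ
        · exact sampleWeight_nonneg hq.1 σ
        · exact hF σ
    _ = 4 * P ^ 2 := by rw [← Finset.sum_mul, sum_sampleWeight hq.2, one_mul]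

/-- Pisier's inequality for `(2,1)`-summing operators on `ℓ_∞`. The weights are realised by drawing
about `∑ i, l i` samples from the probability proportional to `l`. -/
theorem sum_mul_sq_norm_le (hV : HasTwoOneSummingBound V P) {l : ι → ℝ} (hl : ∀ i, 0 ≤ l i)
    (hg : ∀ i k, |g i k| ≤ 1) (hlg : ∀ k, ∑ i, l i * |g i k| ≤ 1) :
    ∑ i, l i * ‖V (g i)‖ ^ 2 ≤ 4 * P ^ 2 := by
  set m := ∑ i, l i
  rcases (show 0 ≤ m from Finset.sum_nonneg fun i _ => hl i).eq_or_lt with hm | hm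
  · have hl_zero (i) : l i = 0 :=
      (Finset.sum_eq_zero_iff_of_nonneg fun i _ => hl i).mp hm.symm i (Finset.mem_univ i)
    simp only [hl_zero, zero_mul, Finset.sum_const_zero]
    positivity
  set q : ι → ℝ := fun i => l i / m
  have hq : q ∈ stdSimplex ℝ ι :=
    ⟨fun i => div_nonneg (hl i) hm.le, by rw [← Finset.sum_div, div_self hm.ne']⟩
  have hl_eq (i) : l i = m * q i := (mul_div_cancel₀ _ hm.ne').symm
  have hmul_sum (φ : ι → ℝ) : ∑ i, l i * φ i = m * ∑ i, q i * φ i := by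
    simp only [hl_eq, mul_assoc, Finset.mul_sum]
  rw [hmul_sum]
  refine le_trans ?_ (hV.succ_mul_sum_mul_sq_norm_le hq hg (N := ⌊m⌋₊) fun k => ?_)
  · exact mul_le_mul_of_nonneg_right (Nat.lt_floor_add_one m).le
      (Finset.sum_nonneg fun i _ => mul_nonneg (hq.1 i) (sq_nonneg _))
  · refine le_trans ?_ (hlg k)
    rw [hmul_sum]
    exact mul_le_mul_of_nonneg_right (Nat.floor_le hm.le)
      (Finset.sum_nonneg fun i _ => mul_nonneg (hq.1 i) (abs_nonneg _))

lemma sum_mul_sq_norm_le_of_abs_le (hV : HasTwoOneSummingBound V P) {c : ℝ} (hc : 0 < c)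
    {l u : ι → ℝ} {x : ι → κ → ℝ} (hl : ∀ i, 0 ≤ l i) (hu : ∀ i, 0 < u i)
    (hx : ∀ i k, |x i k| ≤ u i) (hlx : ∀ k, ∑ i, l i * (u i * |x i k|) ≤ c) :
    ∑ i, l i * ‖V (x i)‖ ^ 2 ≤ 4 * c * P ^ 2 := by
  have habs (i k) : |((u i)⁻¹ • x i) k| = (u i)⁻¹ * |x i k| := by
    rw [Pi.smul_apply, smul_eq_mul, abs_mul, abs_inv, abs_of_pos (hu i)]
  have hweight (i) (t : ℝ) : l i * u i ^ 2 / c * ((u i)⁻¹ * t) = l i * (u i * t) / c := by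
    field_simp [(hu i).ne']
  have hnorm (i) : l i * u i ^ 2 / c * ‖V ((u i)⁻¹ • x i)‖ ^ 2 = l i * ‖V (x i)‖ ^ 2 / c := by
    rw [map_smul, norm_smul, norm_inv, Real.norm_of_nonneg (hu i).le]
    field_simp [(hu i).ne']
  have hpisier := hV.sum_mul_sq_norm_le (l := fun i => l i * u i ^ 2 / c)
    (g := fun i => (u i)⁻¹ • x i) (fun i => div_nonneg (mul_nonneg (hl i) (sq_nonneg _)) hc.le)
    (fun i k => habs i k ▸ inv_mul_le_one_of_le₀ (hx i k) (hu i).le) fun k => by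
      simp only [habs, hweight, ← Finset.sum_div]
      exact div_le_one_of_le₀ (hlx k) hc.le
  simp only [hnorm, ← Finset.sum_div] at hpisier
  rw [div_le_iff₀ hc] at hpisier
  linarith

end HasTwoOneSummingBound

end Sampling

section Layers

/-- The truncation of `y` to `[-r, r]`. -/
def clip (r y : ℝ) : ℝ :=
  max (-r) (min y r)

lemma clip_of_abs_le {r y : ℝ} (h : |y| ≤ r) : clip r y = y := by
  rw [clip, min_eq_left (abs_le.mp h).2, max_eq_right (abs_le.mp h).1]

lemma abs_clip_le {r : ℝ} (hr : 0 ≤ r) (y : ℝ) : |clip r y| ≤ r :=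
  abs_le.mpr ⟨le_max_left _ _, max_le (by linarith) (min_le_right _ _)⟩

lemma sq_clip_le {r : ℝ} (hr : 0 ≤ r) (y : ℝ) : clip r y ^ 2 ≤ y ^ 2 := by
  rcases le_total |y| r with h | h
  · rw [clip_of_abs_le h]
  · exact sq_le_sq.mpr ((abs_clip_le hr y).trans h)

lemma clip_neg {r : ℝ} (hr : 0 ≤ r) (y : ℝ) : clip r (-y) = -clip r y := by
  simp only [clip, max_def, min_def]
  split_ifs <;> linarith

lemma clip_of_nonneg {r y : ℝ} (hr : 0 ≤ r) (hy : 0 ≤ y) : clip r y = min y r :=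
  max_eq_right (by linarith [le_min hy hr])

lemma abs_clip_sub_clip_le {a b : ℝ} (hba : b ≤ a) (y : ℝ) :
    |clip a y - clip b y| ≤ a - b := by
  have hmax := abs_max_sub_max_le_max (-a) (min y a) (-b) (min y b)
  have hmin := abs_min_sub_min_le_max y a y b
  have hneg : |-a - -b| = a - b := by rw [abs_of_nonpos (by linarith)]; ring
  rw [hneg] at hmax
  rw [sub_self, abs_zero, abs_of_nonneg (sub_nonneg.mpr hba), max_eq_right (sub_nonneg.mpr hba)]
    at hmin
  exact hmax.trans (max_le le_rfl hmin)

lemma two_mul_abs_clip_sub_clip_le {a b : ℝ} (hb : 0 ≤ b) (hba : b ≤ a) (y : ℝ) :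
    2 * b * |clip a y - clip b y| ≤ clip a y ^ 2 - clip b y ^ 2 := by
  wlog hy : 0 ≤ y generalizing y
  · have := this (-y) (by linarith)
    rwa [clip_neg hb, clip_neg (hb.trans hba), neg_sq, neg_sq, neg_sub_neg, abs_sub_comm] at this
  rw [clip_of_nonneg hb hy, clip_of_nonneg (hb.trans hba) hy]
  rcases le_total y b with hyb | hby
  · simp only [min_eq_left hyb, min_eq_left (hyb.trans hba), sub_self, abs_zero, mul_zero, le_refl]
  · rw [min_eq_right hby, abs_of_nonneg (sub_nonneg.mpr (le_min hby hba))]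
    nlinarith [le_min hby hba]

/-- The part of `y` whose absolute value lies between `b / 2 ^ (s + 1)` and `b / 2 ^ s`. -/
def layer (b : ℝ) (s : ℕ) (y : ℝ) : ℝ :=
  clip (b / 2 ^ s) y - clip (b / 2 ^ (s + 1)) y

lemma div_two_pow_eq_two_mul (b : ℝ) (s : ℕ) : b / 2 ^ s = 2 * (b / 2 ^ (s + 1)) := by
  rw [pow_succ]
  field_simp

variable {b : ℝ}

lemma abs_layer_le (hb : 0 ≤ b) (s : ℕ) (y : ℝ) : |layer b s y| ≤ b / 2 ^ (s + 1) := by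
  have hnonneg : 0 ≤ b / 2 ^ (s + 1) := by positivity
  rw [layer, div_two_pow_eq_two_mul b s]
  exact (abs_clip_sub_clip_le (by linarith) y).trans_eq (by ring)

lemma clip_add_sum_layer {y : ℝ} (hy : |y| ≤ b) (L : ℕ) :
    clip (b / 2 ^ L) y + ∑ s : Fin L, layer b s y = y := by
  simp only [layer]
  rw [Fin.sum_univ_eq_sum_range fun s => clip (b / 2 ^ s) y - clip (b / 2 ^ (s + 1)) y,
    Finset.sum_range_sub', pow_zero, div_one, add_sub_cancel, clip_of_abs_le hy]

lemma mul_abs_layer_le (hb : 0 ≤ b) (s : ℕ) (y : ℝ) :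
    b / 2 ^ (s + 1) * |layer b s y| ≤
      (clip (b / 2 ^ s) y ^ 2 - clip (b / 2 ^ (s + 1)) y ^ 2) / 2 := by
  have hnonneg : 0 ≤ b / 2 ^ (s + 1) := by positivity
  rw [layer, div_two_pow_eq_two_mul b s, le_div_iff₀' two_pos, ← mul_assoc]
  exact two_mul_abs_clip_sub_clip_le hnonneg (by linarith) y

lemma sum_mul_abs_layer_le (hb : 0 ≤ b) (L : ℕ) (y : ℝ) :
    ∑ s : Fin L, b / 2 ^ ((s : ℕ) + 1) * |layer b s y| ≤ y ^ 2 / 2 := by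
  rw [Fin.sum_univ_eq_sum_range fun s => b / 2 ^ (s + 1) * |layer b s y|]
  calc ∑ s ∈ Finset.range L, b / 2 ^ (s + 1) * |layer b s y|
      ≤ ∑ s ∈ Finset.range L, (clip (b / 2 ^ s) y ^ 2 - clip (b / 2 ^ (s + 1)) y ^ 2) / 2 :=
        Finset.sum_le_sum fun s _ => mul_abs_layer_le hb s y
    _ = (clip (b / 2 ^ 0) y ^ 2 - clip (b / 2 ^ L) y ^ 2) / 2 := by
        rw [← Finset.sum_div, Finset.sum_range_sub' fun s => clip (b / 2 ^ s) y ^ 2]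
    _ ≤ y ^ 2 / 2 := by
        gcongr
        exact (sub_le_self _ (sq_nonneg _)).trans (sq_clip_le (by positivity) y)

lemma sq_norm_add_sum_le {σ E : Type*} [Fintype σ] [SeminormedAddCommGroup E] (y : E)
    (z : σ → E) :
    ‖y + ∑ s, z s‖ ^ 2 ≤ (Fintype.card σ + 1) * (‖y‖ ^ 2 + ∑ s, ‖z s‖ ^ 2) := by
  set v : Option σ → E := fun o => o.elim y z
  calc ‖y + ∑ s, z s‖ ^ 2 = ‖∑ o, v o‖ ^ 2 := by rw [Fintype.sum_option]; rfl
    _ ≤ (∑ o, ‖v o‖) ^ 2 := by gcongr; exact norm_sum_le _ _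
    _ ≤ Fintype.card (Option σ) * ∑ o, ‖v o‖ ^ 2 := sq_sum_le_card_mul_sum_sq
    _ = (Fintype.card σ + 1) * (‖y‖ ^ 2 + ∑ s, ‖z s‖ ^ 2) := by
        rw [Fintype.sum_option, Fintype.card_option, Nat.cast_succ]; rfl

lemma sq_div_two_pow_ceil_log_le (hb : 0 < b) : (b / 2 ^ ⌈Real.log b⌉₊) ^ 2 ≤ b := by
  set L := ⌈Real.log b⌉₊
  have hb_le : b ≤ 4 ^ L := by
    calc b = Real.exp (Real.log b) := (Real.exp_log hb).symm
      _ ≤ Real.exp L := Real.exp_le_exp.mpr (Nat.le_ceil _)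
      _ = Real.exp 1 ^ L := by rw [← Real.exp_nat_mul, mul_one]
      _ ≤ 4 ^ L := by gcongr; linarith [Real.exp_one_lt_three]
  rw [div_pow, ← pow_mul, mul_comm L, pow_mul, div_le_iff₀ (by positivity), sq]
  gcongr
  exact hb_le.trans_eq (by norm_num)

namespace HasTwoOneSummingBound

variable {ι κ Y : Type*} [Fintype ι] [NormedAddCommGroup Y] [NormedSpace ℝ Y]
  {V : (κ → ℝ) →ₗ[ℝ] Y} {P : ℝ} {p : ι → ℝ} {f : ι → κ → ℝ}

lemma sum_mul_sum_sq_norm_layer_le (hV : HasTwoOneSummingBound V P) (hp : ∀ i, 0 ≤ p i)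
    (hb : 0 < b) (hf : ∀ k, ∑ i, p i * f i k ^ 2 ≤ b) (L : ℕ) :
    ∑ i, p i * ∑ s : Fin L, ‖V fun k => layer b s (f i k)‖ ^ 2 ≤ 2 * b * P ^ 2 := by
  have hpisier := hV.sum_mul_sq_norm_le_of_abs_le (ι := ι × Fin L) (c := b / 2)
    (l := fun a => p a.1) (u := fun a => b / 2 ^ ((a.2 : ℕ) + 1))
    (x := fun a k => layer b a.2 (f a.1 k)) (half_pos hb) (fun a => hp a.1)
    (fun a => by positivity) (fun a k => abs_layer_le hb.le a.2 _) fun k => ?_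
  · simp only [Fintype.sum_prod_type, ← Finset.mul_sum] at hpisier
    exact hpisier.trans_eq (by ring)
  · calc ∑ a : ι × Fin L, p a.1 * (b / 2 ^ ((a.2 : ℕ) + 1) * |layer b a.2 (f a.1 k)|)
        = ∑ i, p i * ∑ s : Fin L, b / 2 ^ ((s : ℕ) + 1) * |layer b s (f i k)| := by
          simp only [Fintype.sum_prod_type, Finset.mul_sum]
      _ ≤ ∑ i, p i * (f i k ^ 2 / 2) := by
          gcongr with i
          · exact hp i
          · exact sum_mul_abs_layer_le hb.le L _
      _ ≤ b / 2 := by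
          simp only [← mul_div_assoc, ← Finset.sum_div]
          gcongr
          exact hf k

lemma sq_norm_clip_le (hV : HasTwoOneSummingBound V P) {r : ℝ} (hr : 0 < r) (x : κ → ℝ) :
    ‖V fun k => clip r (x k)‖ ^ 2 ≤ r ^ 2 * P ^ 2 := by
  simpa only [Fin.sum_univ_one] using hV.sum_sq_norm_le hr (N := 1)
    (h := fun _ k => clip r (x k)) fun k => by
      simpa only [Fin.sum_univ_one] using abs_clip_le hr.le _

theorem sum_mul_sq_norm_le_log (hV : HasTwoOneSummingBound V P) (hp : p ∈ stdSimplex ℝ ι)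
    (hb : 1 ≤ b) (hf_abs : ∀ i k, |f i k| ≤ b) (hf_sq : ∀ k, ∑ i, p i * f i k ^ 2 ≤ b) :
    ∑ i, p i * ‖V (f i)‖ ^ 2 ≤ 6 * (b * (1 + Real.log b)) * P ^ 2 := by
  have hb_pos : 0 < b := one_pos.trans_le hb
  set L := ⌈Real.log b⌉₊
  set R : ι → ℝ := fun i => ‖V fun k => clip (b / 2 ^ L) (f i k)‖ ^ 2
  set S : ι → ℝ := fun i => ∑ s : Fin L, ‖V fun k => layer b s (f i k)‖ ^ 2
  have hsplit (i) : ‖V (f i)‖ ^ 2 ≤ (L + 1) * (R i + S i) := by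
    have hf_eq : f i = (fun k => clip (b / 2 ^ L) (f i k)) +
        ∑ s : Fin L, fun k => layer b s (f i k) := by
      ext k
      rw [Pi.add_apply, Finset.sum_apply, clip_add_sum_layer (hf_abs i k)]
    conv_lhs => rw [hf_eq, map_add, map_sum]
    simpa only [Fintype.card_fin] using sq_norm_add_sum_le (V fun k => clip (b / 2 ^ L) (f i k))
      fun s : Fin L => V fun k => layer b s (f i k)
  have hR (i) : R i ≤ b * P ^ 2 :=
    (hV.sq_norm_clip_le (by positivity) (f i)).trans
      (mul_le_mul_of_nonneg_right (sq_div_two_pow_ceil_log_le hb_pos) (sq_nonneg P))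
  calc ∑ i, p i * ‖V (f i)‖ ^ 2
      ≤ ∑ i, p i * ((L + 1) * (b * P ^ 2 + S i)) := by
        gcongr with i
        · exact hp.1 i
        · exact (hsplit i).trans (by gcongr; exact hR i)
    _ = (L + 1) * (b * P ^ 2 + ∑ i, p i * S i) := by
        simp only [mul_left_comm (p _), ← Finset.mul_sum, mul_add, Finset.sum_add_distrib,
          ← Finset.sum_mul, hp.2, one_mul]
    _ ≤ (L + 1) * (b * P ^ 2 + 2 * b * P ^ 2) := by
        gcongr
        exact hV.sum_mul_sum_sq_norm_layer_le hp.1 hb_pos hf_sq L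
    _ ≤ (2 * (1 + Real.log b)) * (b * P ^ 2 + 2 * b * P ^ 2) := by
        gcongr
        linarith [Nat.ceil_lt_add_one (Real.log_nonneg hb), Real.log_nonneg hb]
    _ = 6 * (b * (1 + Real.log b)) * P ^ 2 := by ring

end HasTwoOneSummingBound

end Layers

section SummingNorms

variable {X Y : Type*} [NormedAddCommGroup X] [NormedSpace ℝ X] [NormedAddCommGroup Y]
  [NormedSpace ℝ Y]

lemma eSum_one_ofReal {ι : Type*} [Fintype ι] {a : ι → ℝ} (ha : ∀ j, 0 ≤ a j) :
    eSum 1 (fun j => ENNReal.ofReal (a j)) = ENNReal.ofReal (∑ j, a j) := by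
  simp only [eSum, ENNReal.one_ne_top, if_false, ENNReal.toReal_one, ENNReal.rpow_one, div_one]
  rw [ENNReal.ofReal_sum_of_nonneg fun j _ => ha j]

lemma eSum_two_ofReal {ι : Type*} [Fintype ι] {a : ι → ℝ} (ha : ∀ j, 0 ≤ a j) :
    eSum 2 (fun j => ENNReal.ofReal (a j)) = ENNReal.ofReal √(∑ j, a j ^ 2) := by
  simp only [eSum, ENNReal.ofNat_ne_top, if_false, ENNReal.toReal_ofNat, ENNReal.rpow_two,
    ← ENNReal.ofReal_pow (ha _)]
  rw [← ENNReal.ofReal_sum_of_nonneg fun j _ => sq_nonneg (a j), Real.sqrt_eq_rpow,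
    ENNReal.ofReal_rpow_of_nonneg (Finset.sum_nonneg fun j _ => sq_nonneg _) (by norm_num)]

lemma weakLq_one_le_one_iff {N : ℕ} {x : Fin N → X} :
    weakLq 1 x ≤ 1 ↔ ∀ f : X →L[ℝ] ℝ, ‖f‖ ≤ 1 → ∑ j, |f (x j)| ≤ 1 := by
  simp only [weakLq, iSup_le_iff, Subtype.forall, eSum_one_ofReal fun _ => abs_nonneg _,
    ENNReal.ofReal_le_one]

lemma sum_sq_norm_le_sq_piPQ {T : X →L[ℝ] Y} (hT : piPQ 2 1 T ≠ ∞) {N : ℕ} {x : Fin N → X}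
    (hx : weakLq 1 x ≤ 1) : ∑ j, ‖T (x j)‖ ^ 2 ≤ (piPQ 2 1 T).toReal ^ 2 := by
  have hle : eSum 2 (fun k => ENNReal.ofReal ‖T (x k)‖) ≤ piPQ 2 1 T :=
    (le_iSup (fun x : {x : Fin N → X // weakLq 1 x ≤ 1} =>
      eSum 2 fun k => ENNReal.ofReal ‖T (x.1 k)‖) ⟨x, hx⟩).trans
      (le_iSup (fun n => piN 2 1 n T) N)
  rw [eSum_two_ofReal fun _ => norm_nonneg _, ENNReal.ofReal_le_iff_le_toReal hT] at hle
  exact (Real.sqrt_le_left ENNReal.toReal_nonneg).mp hle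

lemma weakLq_one_linearCombination_le_one {m N : ℕ} {x : Fin m → X} (hx : weakLq 1 x ≤ 1)
    {h : Fin N → Fin m → ℝ} (hh : ∀ k, ∑ j, |h j k| ≤ 1) :
    weakLq 1 (fun j => Fintype.linearCombination ℝ x (h j)) ≤ 1 := by
  rw [weakLq_one_le_one_iff] at hx ⊢
  intro f hf
  calc ∑ j, |f (Fintype.linearCombination ℝ x (h j))|
      = ∑ j, |∑ k, h j k * f (x k)| := by
        simp only [Fintype.linearCombination_apply, map_sum, map_smul, smul_eq_mul]
    _ ≤ ∑ j, ∑ k, |h j k * f (x k)| := by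
        gcongr
        exact Finset.abs_sum_le_sum_abs _ _
    _ = ∑ k, (∑ j, |h j k|) * |f (x k)| := by
        rw [Finset.sum_comm]
        simp only [abs_mul, Finset.sum_mul]
    _ ≤ ∑ k, 1 * |f (x k)| := by
        gcongr with k
        exact hh k
    _ ≤ 1 := by simpa only [one_mul] using hx f hf

lemma hasTwoOneSummingBound_comp_linearCombination {T : X →L[ℝ] Y} (hT : piPQ 2 1 T ≠ ∞) {m : ℕ}
    {x : Fin m → X} (hx : weakLq 1 x ≤ 1) :
    HasTwoOneSummingBound ((T : X →ₗ[ℝ] Y) ∘ₗ Fintype.linearCombination ℝ x)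
      (piPQ 2 1 T).toReal :=
  fun _ _ hh => sum_sq_norm_le_sq_piPQ hT (weakLq_one_linearCombination_le_one hx hh)

lemma eq_zero_of_rankLE_zero {T : X →L[ℝ] Y} (hT : RankLE T 0) : T = 0 := by
  obtain ⟨hfinite, hrank⟩ := hT
  have hrange := Submodule.finrank_eq_zero.mp (Nat.le_zero.mp hrank)
  exact ContinuousLinearMap.coe_injective (LinearMap.range_eq_bot.mp hrange)

lemma exists_sum_norm_le_sum_mul_norm {T : X →L[ℝ] Y} {n : ℕ} (hT : RankLE T n) {ι : Type*}
    [Fintype ι] [Nonempty ι] (x : ι → X) :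
    ∃ p ∈ stdSimplex ℝ ι, ∃ K : ι → ι → ℝ,
      (∀ i k, |K i k| ≤ n) ∧ (∀ k, ∑ i, p i * K i k ^ 2 ≤ n) ∧
      ∑ k, ‖T (x k)‖ ≤ ∑ i, p i * ‖T (Fintype.linearCombination ℝ x (K i))‖ := by
  obtain ⟨hfinite, hrank⟩ := hT
  choose φ hφ_norm hφ using fun k => exists_dual_vector'' ℝ (T (x k))
  set w : Y →ₗ[ℝ] (ι → ℝ) := LinearMap.pi fun k => (φ k : Y →ₗ[ℝ] ℝ)
  set G := (LinearMap.range (T : X →ₗ[ℝ] Y)).map w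
  have hG : (Module.finrank ℝ G : ℝ) ≤ n := mod_cast (Submodule.finrank_map_le w _).trans hrank
  obtain ⟨p, hp, K, hK_abs, hK_sq, hK⟩ := exists_reproducing_kernel G
  refine ⟨p, hp, K, fun i k => (hK_abs i k).trans hG, fun k => (hK_sq k).trans hG, ?_⟩
  calc ∑ k, ‖T (x k)‖ = ∑ k, ∑ i, p i * K i k * φ i (T (x k)) := by
        refine Finset.sum_congr rfl fun k _ => ?_
        have hmem : w (T (x k)) ∈ G := Submodule.mem_map_of_mem ⟨x k, rfl⟩
        exact (hφ k).symm.trans (hK _ hmem k)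
    _ = ∑ i, p i * φ i (T (Fintype.linearCombination ℝ x (K i))) := by
        rw [Finset.sum_comm]
        simp only [Fintype.linearCombination_apply, map_sum, map_smul, smul_eq_mul,
          Finset.mul_sum, mul_assoc]
    _ ≤ ∑ i, p i * ‖T (Fintype.linearCombination ℝ x (K i))‖ := by
        gcongr with i
        · exact hp.1 i
        · exact (le_abs_self _).trans
            (((φ i).le_of_opNorm_le (hφ_norm i) _).trans_eq (one_mul _))

lemma sum_norm_le_of_rankLE {T : X →L[ℝ] Y} {n : ℕ} (hn : n ≠ 0) (hT : RankLE T n)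
    (hfin : piPQ 2 1 T ≠ ∞) {m : ℕ} {x : Fin m → X} (hx : weakLq 1 x ≤ 1) :
    ∑ k, ‖T (x k)‖ ≤ 3 * ((n : ℝ) * (1 + Real.log n)) ^ ((1 : ℝ) / 2) * (piPQ 2 1 T).toReal := by
  set A := (n : ℝ) * (1 + Real.log n)
  have hA : 0 ≤ A := by positivity
  rw [← Real.sqrt_eq_rpow]
  rcases isEmpty_or_nonempty (Fin m) with _ | _
  · rw [Finset.univ_eq_empty, Finset.sum_empty]
    positivity
  obtain ⟨p, hp, K, hK_abs, hK_sq, hsum⟩ := exists_sum_norm_le_sum_mul_norm hT x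
  set y : Fin m → Y := fun i => T (Fintype.linearCombination ℝ x (K i))
  have hlog : ∑ i, p i * ‖y i‖ ^ 2 ≤ 6 * A * (piPQ 2 1 T).toReal ^ 2 :=
    (hasTwoOneSummingBound_comp_linearCombination hfin hx).sum_mul_sq_norm_le_log hp
      (mod_cast Nat.one_le_iff_ne_zero.mpr hn) hK_abs hK_sq
  have hjensen : (∑ i, p i * ‖y i‖) ^ 2 ≤ ∑ i, p i * ‖y i‖ ^ 2 := by
    simpa only [smul_eq_mul, Real.norm_eq_abs, sq_abs, abs_norm] using
      sq_norm_sum_smul_le hp fun i => ‖y i‖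
  refine hsum.trans (abs_le_of_sq_le_sq' ((hjensen.trans hlog).trans ?_) (by positivity)).2
  rw [mul_pow, mul_pow, Real.sq_sqrt hA]
  gcongr
  norm_num

theorem statement9_general (n : ℕ) (T : X →L[ℝ] Y) (hT : RankLE T n) :
    piPQ 1 1 T ≤
      ENNReal.ofReal (3 * ((n : ℝ) * (1 + Real.log n)) ^ ((1 : ℝ) / 2)) * piPQ 2 1 T := by
  refine iSup_le fun m => iSup_le fun ⟨x, hx⟩ => ?_
  rw [eSum_one_ofReal fun _ => norm_nonneg _]
  rcases eq_or_ne n 0 with rfl | hn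
  · simp [eq_zero_of_rankLE_zero hT]
  have hpos : 0 < 3 * ((n : ℝ) * (1 + Real.log n)) ^ ((1 : ℝ) / 2) := by positivity
  by_cases hfin : piPQ 2 1 T = ∞
  · rw [hfin, ENNReal.mul_top (ENNReal.ofReal_pos.mpr hpos).ne']
    exact le_top
  rw [← ENNReal.ofReal_toReal hfin, ← ENNReal.ofReal_mul hpos.le]
  exact ENNReal.ofReal_le_ofReal (sum_norm_le_of_rankLE hn hT hfin hx)

end SummingNorms

/-- there is an absolute constant `c₀` such that for any absolutely
`(2,1)`-summing operator `T` of rank at most `n`,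
`π_1(T) ≤ c₀ (n(1 + ln n))^{1/2} π_{2,1}(T)`. -/
theorem statement9 :
    ∃ c₀ : ℝ, 0 < c₀ ∧
      ∀ (n : ℕ) (X Y : Type*) [NormedAddCommGroup X] [NormedSpace ℝ X] [CompleteSpace X]
        [NormedAddCommGroup Y] [NormedSpace ℝ Y] [CompleteSpace Y]
        (T : X →L[ℝ] Y), RankLE T n → piPQ 2 1 T < ∞ →
        piPQ 1 1 T ≤
          ENNReal.ofReal (c₀ * ((n : ℝ) * (1 + Real.log n)) ^ ((1 : ℝ) / 2)) *
            piPQ 2 1 T :=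
  ⟨3, three_pos, fun n _ _ _ _ _ _ _ _ T hT _ => statement9_general n T hT⟩

end
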